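/- The function Ω_t extends continuously to [0,1] × [0,1] in (t,α) (in particular (G_P''(α)/G_t''(α))^{1/2} → 1 as α → 0⁺ or α → 1⁻, uniformly in t ∈ [0,1]), and there exists a constant C > 0 such that for every integer N ≥ 1, sup_{t∈[0,1], α∈[0,1]} |q_t^N(α) − Ω_t(α)| ≤ C·N^{−1/4}; in particular q_t^N(α) → Ω_t(α) as N → ∞, uniformly in (t,α). -/

import Mathlib

open Set Filter

noncomputable def GP : ℝ → ℝ := fun x => x * Real.log x + (1 - x) * Real.log (1 - x)

noncomputable def Gt (f0 f1 : ℝ → ℝ) (t : ℝ) : ℝ → ℝ :=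
  fun x => GP x + ((1 - t) * f0 x + t * f1 x)

noncomputable def Phase (G : ℝ → ℝ) (α : ℝ) : ℝ → ℝ :=
  fun x => (x - α) * deriv G x - (G x - G α)

noncomputable def Qnorm (G : ℝ → ℝ) (N : ℕ) (α : ℝ) : ℝ :=
  2 * Real.pi * ∫ x in (0:ℝ)..1, Real.exp (-(N : ℝ) * Phase G α x)

noncomputable def RPhase (G : ℝ → ℝ) (α : ℝ) : ℝ → ℝ :=
  fun y => (1 / α) * Phase G α (α * (1 + y))

noncomputable def Leg (G : ℝ → ℝ) (S : Set ℝ) : ℝ → ℝ :=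
  fun ρ => sSup ((fun x => x * ρ - G x) '' S)

noncomputable def QQ (G : ℝ → ℝ) (N : ℕ) (α : ℝ) : ℝ :=
  Qnorm G N α * Real.exp ((N : ℝ) * G α)

noncomputable def Omg (f0 f1 : ℝ → ℝ) (t α : ℝ) : ℝ :=
  if α = 0 ∨ α = 1 then 1
  else (iteratedDeriv 2 GP α / iteratedDeriv 2 (Gt f0 f1 t) α) ^ ((1:ℝ)/2)


noncomputable def BW (a b : ℝ) (x : ℝ) : ℝ := x ^ a * (1 - x) ^ b

lemma BW_cont {a b : ℝ} (ha : 0 ≤ a) (hb : 0 ≤ b) : Continuous (BW a b) := by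
  unfold BW
  exact (Real.continuous_rpow_const ha).mul
    ((Real.continuous_rpow_const hb).comp (continuous_const.sub continuous_id))

lemma BW_pos {a b x : ℝ} (hx : x ∈ Ioo (0:ℝ) 1) : 0 < BW a b x := by
  unfold BW
  exact mul_pos (Real.rpow_pos_of_pos hx.1 _) (Real.rpow_pos_of_pos (by linarith [hx.2]) _)

lemma BW_nonneg {a b x : ℝ} (hx : x ∈ Icc (0:ℝ) 1) : 0 ≤ BW a b x := by
  unfold BW
  exact mul_nonneg (Real.rpow_nonneg hx.1 _) (Real.rpow_nonneg (by linarith [hx.2]) _)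

lemma BW_deriv {a b x : ℝ} (hx : x ∈ Ioo (0:ℝ) 1) :
    HasDerivAt (BW a b) (BW a b x * (a / x - b / (1 - x))) x := by
  have h0 : 0 < x := hx.1
  have h1 : 0 < 1 - x := by linarith [hx.2]
  have d1 : HasDerivAt (fun x : ℝ => x ^ a) (a * x ^ (a - 1)) x :=
    Real.hasDerivAt_rpow_const (Or.inl h0.ne')
  have d2 : HasDerivAt (fun x : ℝ => (1 - x) ^ b) (-1 * b * (1 - x) ^ (b - 1)) x :=
    ((hasDerivAt_id x).const_sub 1).rpow_const (Or.inl h1.ne')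
  refine (d1.mul d2).congr_deriv ?_
  rw [Real.rpow_sub_one h0.ne', Real.rpow_sub_one h1.ne']
  unfold BW
  ring

/-- Integration by parts against the weight. -/
lemma ibp {N α s : ℝ} (hN : 0 ≤ N) (hα : α ∈ Icc (0:ℝ) 1) (D f2 y V V' : ℝ → ℝ)
    (hD : ∀ x, HasDerivAt D ((x - α) * f2 x) x) (hf2 : Continuous f2)
    (hV : ∀ x, V x = x * (1 - x) * y x) (hy : ContinuousOn y (Icc 0 1))
    (hVd : ∀ x ∈ Ioo (0:ℝ) 1, HasDerivAt V (V' x) x) (hV' : ContinuousOn V' (Icc 0 1)) :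
    ∫ x in (0:ℝ)..1, V' x * (BW (N * α) (N * (1 - α)) x * Real.exp (-N * s * D x)) =
    N * ∫ x in (0:ℝ)..1, (x - α) * (1 + s * (x * (1 - x) * f2 x)) * y x *
      (BW (N * α) (N * (1 - α)) x * Real.exp (-N * s * D x)) := by
  have hDc : Continuous D := continuous_iff_continuousAt.2 fun x => (hD x).continuousAt
  have hB : Continuous (BW (N * α) (N * (1 - α))) :=
    BW_cont (mul_nonneg hN hα.1) (mul_nonneg hN (by linarith [hα.2]))
  have hρ : Continuous fun x => BW (N * α) (N * (1 - α)) x * Real.exp (-N * s * D x) := by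
    fun_prop
  have hVc : ContinuousOn V (Icc 0 1) := by
    have : V = fun x => x * (1 - x) * y x := funext hV
    rw [this]
    exact (Continuous.continuousOn (by fun_prop)).mul hy
  have hI1 : ContinuousOn (fun x => V' x * (BW (N * α) (N * (1 - α)) x * Real.exp (-N * s * D x)))
      (Icc 0 1) := hV'.mul hρ.continuousOn
  have hI2 : ContinuousOn (fun x => (x - α) * (1 + s * (x * (1 - x) * f2 x)) * y x *
      (BW (N * α) (N * (1 - α)) x * Real.exp (-N * s * D x))) (Icc 0 1) :=
    ((Continuous.continuousOn (by fun_prop)).mul hy).mul hρ.continuousOn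
  have key := intervalIntegral.integral_eq_sub_of_hasDerivAt_of_le (zero_le_one' ℝ)
    (f := fun x => V x * (BW (N * α) (N * (1 - α)) x * Real.exp (-N * s * D x)))
    (f' := fun x => V' x * (BW (N * α) (N * (1 - α)) x * Real.exp (-N * s * D x)) -
      N * ((x - α) * (1 + s * (x * (1 - x) * f2 x)) * y x *
      (BW (N * α) (N * (1 - α)) x * Real.exp (-N * s * D x))))
    (hVc.mul hρ.continuousOn) (by
      intro x hx
      have h0 : x ≠ 0 := hx.1.ne'
      have h1 : 1 - x ≠ 0 := by have := hx.2; intro h; linarith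
      have := (hVd x hx).mul ((BW_deriv (a := N * α) (b := N * (1 - α)) hx).mul
        (((hD x).const_mul (-N * s)).exp))
      refine this.congr_deriv ?_
      rw [hV]
      simp only [Pi.mul_apply]
      field_simp
      ring) (by
      apply ContinuousOn.intervalIntegrable
      rw [uIcc_of_le zero_le_one]
      exact hI1.sub (continuousOn_const.mul hI2))
  rw [intervalIntegral.integral_sub, intervalIntegral.integral_const_mul] at key
  · simp only [hV] at key
    simp only [zero_mul, mul_zero, sub_self, sub_zero] at key
    linarith
  · apply ContinuousOn.intervalIntegrable
    rwa [uIcc_of_le zero_le_one]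
  · apply ContinuousOn.intervalIntegrable
    rw [uIcc_of_le zero_le_one]
    exact continuousOn_const.mul hI2

lemma core_arith {q c B Z M2 M4 : ℝ} (hsq : 0 < q) (hc : 0 < c) (hc1 : c ≤ 1) (hB0 : 0 ≤ B)
    (hZ0 : 0 ≤ Z) (m2 : M2 ≤ 2 / (q ^ 2 * c) * Z) (m4 : M4 ≤ 4 / (q ^ 4 * c ^ 2) * Z) :
    (B / 4 * q ^ 3) * M4 + ((B / 4 * q + B / c ^ 2 * q) * M2 + B / c ^ 2 / q * Z)
      ≤ 6 * B / c ^ 4 / q * Z := by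
  have e2 : 1 / c ^ 2 ≤ 1 / c ^ 4 :=
    one_div_le_one_div_of_le (by positivity) (pow_le_pow_of_le_one hc.le hc1 (by norm_num))
  have e3 : 1 / c ^ 3 ≤ 1 / c ^ 4 :=
    one_div_le_one_div_of_le (by positivity) (pow_le_pow_of_le_one hc.le hc1 (by norm_num))
  have e1 : 1 / c ^ 1 ≤ 1 / c ^ 4 :=
    one_div_le_one_div_of_le (by positivity) (pow_le_pow_of_le_one hc.le hc1 (by norm_num))
  have e4 : 0 < 1 / c ^ 4 := by positivity
  calc _ ≤ (B / 4 * q ^ 3) * (4 / (q ^ 4 * c ^ 2) * Z) +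
        ((B / 4 * q + B / c ^ 2 * q) * (2 / (q ^ 2 * c) * Z) + B / c ^ 2 / q * Z) := by gcongr
    _ = (B / q * Z) * (1 / c ^ 2 + 1 / 2 * (1 / c ^ 1) + 2 * (1 / c ^ 3) + 1 / c ^ 2) := by
      field_simp; ring
    _ ≤ (B / q * Z) * (6 * (1 / c ^ 4)) := by
      apply mul_le_mul_of_nonneg_left _ (by positivity)
      linarith
    _ = _ := by ring

set_option maxHeartbeats 1000000 in
lemma core_bound {N α s c B : ℝ} (hN : 1 ≤ N) (hα : α ∈ Icc (0:ℝ) 1) (hs : s ∈ Icc (0:ℝ) 1)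
    (hc : 0 < c) (hc1 : c ≤ 1) (hB0 : 0 ≤ B)
    (D f2 f3 : ℝ → ℝ) (hDα : D α = 0)
    (hD : ∀ x, HasDerivAt D ((x - α) * f2 x) x)
    (hf2 : ∀ x, HasDerivAt f2 (f3 x) x) (hf3 : Continuous f3)
    (hB2 : ∀ x ∈ Icc (0:ℝ) 1, |f2 x| ≤ B) (hB3 : ∀ x ∈ Icc (0:ℝ) 1, |f3 x| ≤ B)
    (hk : ∀ x ∈ Icc (0:ℝ) 1, c ≤ 1 + x * (1 - x) * f2 x) :
    |N * (∫ x in (0:ℝ)..1, D x * (BW (N * α) (N * (1 - α)) x * Real.exp (-N * s * D x)))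
      - (α * (1 - α) * f2 α) / (2 * (1 + s * (α * (1 - α) * f2 α))) *
      ∫ x in (0:ℝ)..1, (BW (N * α) (N * (1 - α)) x * Real.exp (-N * s * D x))|
    ≤ (6 * B / c ^ 4 / Real.sqrt N) * 
      ∫ x in (0:ℝ)..1, (BW (N * α) (N * (1 - α)) x * Real.exp (-N * s * D x)) := by
  have hN0 : 0 < N := by linarith
  have hDc : Continuous D := continuous_iff_continuousAt.2 fun x => (hD x).continuousAt
  have hf2c : Continuous f2 := continuous_iff_continuousAt.2 fun x => (hf2 x).continuousAt
  have hBW : Continuous (BW (N * α) (N * (1 - α))) :=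
    BW_cont (mul_nonneg hN0.le hα.1) (mul_nonneg hN0.le (by linarith [hα.2]))
  have i1 := @ibp N α s hN0.le hα D f2
  obtain ⟨ρ, hρdef⟩ : ∃ ρ : ℝ → ℝ, ρ = fun x => BW (N * α) (N * (1 - α)) x * Real.exp (-N * s * D x) :=
    ⟨_, rfl⟩
  have hρ : Continuous ρ := by rw [hρdef]; fun_prop
  have hρ0 : ∀ x ∈ Icc (0:ℝ) 1, 0 ≤ ρ x := by
    intro x hx; rw [hρdef]; exact mul_nonneg (BW_nonneg hx) (Real.exp_pos _).le
  have e : ∀ x, BW (N * α) (N * (1 - α)) x * Real.exp (-N * s * D x) = ρ x := by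
    intro x; rw [hρdef]
  simp only [e] at i1 ⊢
  clear e hρdef
  set k : ℝ → ℝ := fun x => x * (1 - x) * f2 x with hkdef
  have hks : ∀ x ∈ Icc (0:ℝ) 1, c ≤ 1 + s * k x := by
    intro x hx
    have := hk x hx
    have h1 := hs.1
    have h2 := hs.2
    simp only [hkdef]
    nlinarith
  have ii : ∀ g : ℝ → ℝ, ContinuousOn g (Icc 0 1) → IntervalIntegrable g MeasureTheory.volume 0 1 := by
    intro g hg
    apply ContinuousOn.intervalIntegrable
    rwa [uIcc_of_le zero_le_one]
  set Z := ∫ x in (0:ℝ)..1, ρ x with hZ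
  set M2 := ∫ x in (0:ℝ)..1, (x - α) ^ 2 * ρ x with hM2
  set M4 := ∫ x in (0:ℝ)..1, (x - α) ^ 4 * ρ x with hM4
  have hxa : ∀ x ∈ Icc (0:ℝ) 1, |x - α| ≤ 1 := by
    intro x hx
    rw [abs_le]; constructor <;> linarith [hx.1, hx.2, hα.1, hα.2]
  have mono : ∀ g h : ℝ → ℝ, ContinuousOn g (Icc 0 1) → ContinuousOn h (Icc 0 1) →
      (∀ x ∈ Icc (0:ℝ) 1, g x ≤ h x) → ∫ x in (0:ℝ)..1, g x * ρ x ≤ ∫ x in (0:ℝ)..1, h x * ρ x := by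
    intro g h hg hh hle
    apply intervalIntegral.integral_mono_on zero_le_one (ii _ (hg.mul hρ.continuousOn))
      (ii _ (hh.mul hρ.continuousOn))
    intro x hx
    exact mul_le_mul_of_nonneg_right (hle x hx) (hρ0 x hx)
  have cm : ∀ (r : ℝ) (g : ℝ → ℝ), ∫ x in (0:ℝ)..1, (r * g x) * ρ x = r * ∫ x in (0:ℝ)..1, g x * ρ x := by
    intro r g
    rw [← intervalIntegral.integral_const_mul]
    congr 1; ext x; ring
  have hadd : ∀ g h : ℝ → ℝ, ContinuousOn g (Icc 0 1) → ContinuousOn h (Icc 0 1) →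
      ∫ x in (0:ℝ)..1, (g x + h x) * ρ x = (∫ x in (0:ℝ)..1, g x * ρ x) + ∫ x in (0:ℝ)..1, h x * ρ x := by
    intro g h hg hh
    have := intervalIntegral.integral_add (ii (fun x => g x * ρ x) (hg.mul hρ.continuousOn))
      (ii (fun x => h x * ρ x) (hh.mul hρ.continuousOn))
    rw [← this]
    congr 1; ext x; ring
  have one : ∫ x in (0:ℝ)..1, 1 * ρ x = Z := by simp [hZ]
  have cst : ∀ r : ℝ, ∫ x in (0:ℝ)..1, r * ρ x = r * Z := by
    intro r; rw [intervalIntegral.integral_const_mul]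
  have hZ0 : 0 ≤ Z := by
    apply intervalIntegral.integral_nonneg zero_le_one hρ0
  -- second moment
  have hA : N * c * M2 ≤ 2 * Z := by
    have h := i1 (fun x => x - α) (fun x => x * (1 - x) * (x - α))
      (fun x => (1 - 2 * x) * (x - α) + x * (1 - x)) hD hf2c (fun x => rfl)
      (Continuous.continuousOn (by fun_prop))
      (by
        intro x hx
        have := (((hasDerivAt_id x).mul ((hasDerivAt_id x).const_sub 1)).mul
          ((hasDerivAt_id x).sub_const α))
        refine this.congr_deriv ?_
        simp only [Pi.mul_apply, id]; ring)
      (Continuous.continuousOn (by fun_prop))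
    have h1 : ∫ x in (0:ℝ)..1, ((1 - 2 * x) * (x - α) + x * (1 - x)) * ρ x ≤ 2 * Z := by
      rw [← cst]
      apply mono _ _ (Continuous.continuousOn (by fun_prop)) continuousOn_const
      intro x hx
      nlinarith [hx.1, hx.2, hα.1, hα.2, mul_nonneg hx.1 hα.1, sq_nonneg (x - 1/2),
        mul_nonneg hx.1 (sub_nonneg.2 hα.2), mul_nonneg (sub_nonneg.2 hx.2) hα.1]
    have h2 : c * M2 ≤ ∫ x in (0:ℝ)..1, (x - α) * (1 + s * (x * (1 - x) * f2 x)) * (x - α) * ρ x := by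
      rw [hM2, ← cm]
      apply mono _ _ (Continuous.continuousOn (by fun_prop)) (Continuous.continuousOn (by fun_prop))
      intro x hx
      have := hks x hx
      simp only [hkdef] at this
      nlinarith [sq_nonneg (x - α)]
    rw [h] at h1
    nlinarith
  have hA4 : N * c * M4 ≤ 2 * M2 := by
    have h := i1 (fun x => (x - α) ^ 3) (fun x => x * (1 - x) * (x - α) ^ 3)
      (fun x => (1 - 2 * x) * (x - α) ^ 3 + 3 * (x * (1 - x)) * (x - α) ^ 2) hD hf2c (fun x => rfl)
      (Continuous.continuousOn (by fun_prop))
      (by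
        intro x hx
        have := (((hasDerivAt_id x).mul ((hasDerivAt_id x).const_sub 1)).mul
          (((hasDerivAt_id x).sub_const α).pow 3))
        refine this.congr_deriv ?_
        simp; ring)
      (Continuous.continuousOn (by fun_prop))
    have h1 : ∫ x in (0:ℝ)..1, ((1 - 2 * x) * (x - α) ^ 3 + 3 * (x * (1 - x)) * (x - α) ^ 2) * ρ x
        ≤ 2 * M2 := by
      rw [hM2, ← cm]
      apply mono _ _ (Continuous.continuousOn (by fun_prop)) (Continuous.continuousOn (by fun_prop))
      intro x hx
      have : (1 - 2 * x) * (x - α) + 3 * (x * (1 - x)) ≤ 2 := by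
        have h1 : (1 - 2 * x) * (x - α) ≤ 1 := by
          have := hxa x hx
          have h2 : |1 - 2 * x| ≤ 1 := by
            rw [abs_le]; constructor <;> linarith [hx.1, hx.2]
          calc _ ≤ |(1 - 2 * x) * (x - α)| := le_abs_self _
            _ = |1 - 2 * x| * |x - α| := abs_mul _ _
            _ ≤ 1 := mul_le_one₀ h2 (abs_nonneg _) this
        nlinarith [sq_nonneg (x - 1/2)]
      nlinarith [sq_nonneg (x - α)]
    have h2 : c * M4 ≤ ∫ x in (0:ℝ)..1, (x - α) * (1 + s * (x * (1 - x) * f2 x)) * (x - α) ^ 3 * ρ x := by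
      rw [hM4, ← cm]
      apply mono _ _ (Continuous.continuousOn (by fun_prop)) (Continuous.continuousOn (by fun_prop))
      intro x hx
      have := hks x hx
      simp only [hkdef] at this
      nlinarith [sq_nonneg ((x - α)^2)]
    rw [h] at h1
    nlinarith
  -- the function w
  set w : ℝ → ℝ := fun x => k x / (2 * (1 + s * k x)) with hw
  set k' : ℝ → ℝ := fun x => (1 - 2 * x) * f2 x + x * (1 - x) * f3 x with hk'
  set w' : ℝ → ℝ := fun x => k' x / (2 * (1 + s * k x) ^ 2) with hw'
  have hkd : ∀ x, HasDerivAt k (k' x) x := by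
    intro x
    have := (((hasDerivAt_id x).mul ((hasDerivAt_id x).const_sub 1)).mul (hf2 x))
    refine this.congr_deriv ?_
    simp only [hk', Pi.mul_apply, id]; ring
  have hwd : ∀ x ∈ Icc (0:ℝ) 1, HasDerivAt w (w' x) x := by
    intro x hx
    have hne : 1 + s * k x ≠ 0 := by have := hks x hx; intro h; linarith
    have := (hkd x).div ((((hkd x).const_mul s).const_add 1).const_mul 2)
      (mul_ne_zero two_ne_zero hne)
    refine this.congr_deriv ?_
    simp only [hw']
    field_simp
    ring
  have hkc : Continuous k := by fun_prop
  have hk'c : Continuous k' := by fun_prop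
  have hwc : ContinuousOn w (Icc 0 1) := fun x hx => (hwd x hx).continuousAt.continuousWithinAt
  have hw'c : ContinuousOn w' (Icc 0 1) := by
    apply ContinuousOn.div hk'c.continuousOn (Continuous.continuousOn (by fun_prop))
    intro x hx
    have := hks x hx
    have : 0 < 1 + s * k x := by linarith
    positivity
  have hw'b : ∀ x ∈ Icc (0:ℝ) 1, |w' x| ≤ B / c ^ 2 := by
    intro x hx
    have h1 : |k' x| ≤ 2 * B := by
      have a1 : |1 - 2 * x| ≤ 1 := by
        rw [abs_le]; constructor <;> linarith [hx.1, hx.2]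
      have a2 : |x * (1 - x)| ≤ 1 := by
        rw [abs_le]; constructor <;> nlinarith [hx.1, hx.2]
      calc |k' x| ≤ |(1 - 2 * x) * f2 x| + |x * (1 - x) * f3 x| := abs_add_le _ _
        _ = |1 - 2 * x| * |f2 x| + |x * (1 - x)| * |f3 x| := by rw [abs_mul, abs_mul _ (f3 x)]
        _ ≤ 1 * B + 1 * B := by
          gcongr
          · exact hB2 x hx
          · exact hB3 x hx
        _ = 2 * B := by ring
    have h2 := hks x hx
    have h3 : 0 < 1 + s * k x := by linarith
    simp only [hw']
    rw [abs_div, abs_of_pos (show 0 < 2 * (1 + s * k x) ^ 2 by positivity)]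
    calc |k' x| / (2 * (1 + s * k x) ^ 2) ≤ (2 * B) / (2 * c ^ 2) := by gcongr
      _ = B / c ^ 2 := by field_simp
  have hwL : ∀ x ∈ Icc (0:ℝ) 1, |w x - w α| ≤ B / c ^ 2 * |x - α| := by
    intro x hx
    have := (convex_Icc (0:ℝ) 1).norm_image_sub_le_of_norm_hasDerivWithin_le
      (f := w) (f' := w') (C := B / c ^ 2) (fun y hy => (hwd y hy).hasDerivWithinAt)
      (fun y hy => hw'b y hy) hα hx
    simpa [Real.norm_eq_abs] using this
  -- third order remainder
  have hDr : ∀ x ∈ Icc (0:ℝ) 1, |D x - (x - α) ^ 2 * f2 x / 2| ≤ B / 2 * |x - α| ^ 3 := by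
    intro x hx
    have hsub : uIcc α x ⊆ Icc (0:ℝ) 1 := by
      apply uIcc_subset_Icc hα hx
    have := (convex_uIcc α x).norm_image_sub_le_of_norm_hasDerivWithin_le
      (f := fun x => D x - (x - α) ^ 2 * f2 x / 2) (f' := fun x => - ((x - α) ^ 2 * f3 x / 2))
      (C := B / 2 * |x - α| ^ 2) (x := α) (y := x) (fun y hy => by
        apply HasDerivAt.hasDerivWithinAt
        have := (hD y).sub (((((hasDerivAt_id y).sub_const α).pow 2).mul (hf2 y)).div_const 2)
        refine this.congr_deriv ?_
        simp; ring)
      (fun y hy => by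
        rw [norm_neg, Real.norm_eq_abs, abs_div, abs_mul, abs_pow, abs_two]
        have h1 : |y - α| ≤ |x - α| := by
          have := Set.abs_sub_left_of_mem_uIcc hy
          exact this
        have h2 := hB3 y (hsub hy)
        calc |y - α| ^ 2 * |f3 y| / 2 ≤ |x - α| ^ 2 * B / 2 := by gcongr
          _ = _ := by ring) left_mem_uIcc right_mem_uIcc
    simp only [Real.norm_eq_abs, hDα, sub_self] at this
    calc _ = |D x - (x - α) ^ 2 * f2 x / 2 - (0 - 0 ^ 2 * f2 α / 2)| := by congr 1; ring
      _ ≤ _ := this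
      _ = _ := by ring
  -- the main identity
  have hC : N * ∫ x in (0:ℝ)..1, ((x - α) ^ 2 * f2 x / 2) * ρ x =
      ∫ x in (0:ℝ)..1, (w x + (x - α) * w' x) * ρ x := by
    have h := i1 (fun x => (x - α) * (f2 x / (2 * (1 + s * k x)))) (fun x => (x - α) * w x)
      (fun x => w x + (x - α) * w' x) hD hf2c (fun x => by simp only [hw, hkdef]; ring)
      (by
        apply ContinuousOn.mul (Continuous.continuousOn (by fun_prop))
        apply ContinuousOn.div (Continuous.continuousOn (by fun_prop)) (Continuous.continuousOn (by fun_prop))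
        intro x hx
        have := hks x hx
        have : 0 < 1 + s * k x := by linarith
        positivity)
      (by
        intro x hx
        have := ((hasDerivAt_id x).sub_const α).mul (hwd x (Ioo_subset_Icc_self hx))
        refine this.congr_deriv ?_
        simp)
      (hwc.add ((Continuous.continuousOn (by fun_prop)).mul hw'c))
    rw [h]
    congr 1
    apply intervalIntegral.integral_congr
    intro x hx
    rw [uIcc_of_le zero_le_one] at hx
    have := hks x hx
    have : 1 + s * k x ≠ 0 := by intro h; linarith
    change _ = (x - α) * (1 + s * k x) * ((x - α) * (f2 x / (2 * (1 + s * k x)))) * ρ x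
    field_simp
  have hsq : 0 < Real.sqrt N := Real.sqrt_pos.2 hN0
  set q := Real.sqrt N with hq
  have hqq : q ^ 2 = N := Real.sq_sqrt hN0.le
  have hcont : ContinuousOn (fun x => N * D x - w α) (Icc 0 1) := by fun_prop
  have hid : N * (∫ x in (0:ℝ)..1, D x * ρ x) - w α * Z =
      ∫ x in (0:ℝ)..1, (N * (D x - (x - α) ^ 2 * f2 x / 2) + (w x + (x - α) * w' x + (-w α))) * ρ x := by
    rw [hadd, cm, hadd, cst, ← hC]
    · have : ∫ x in (0:ℝ)..1, (D x - (x - α) ^ 2 * f2 x / 2) * ρ x =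
        (∫ x in (0:ℝ)..1, D x * ρ x) - ∫ x in (0:ℝ)..1, ((x - α) ^ 2 * f2 x / 2) * ρ x := by
        rw [← intervalIntegral.integral_sub]
        · congr 1; ext x; ring
        · exact ii _ (Continuous.continuousOn (by fun_prop))
        · exact ii _ (Continuous.continuousOn (by fun_prop))
      rw [this]; ring
    · exact hwc.add ((Continuous.continuousOn (by fun_prop)).mul hw'c)
    · exact continuousOn_const
    · exact Continuous.continuousOn (by fun_prop)
    · exact (hwc.add ((Continuous.continuousOn (by fun_prop)).mul hw'c)).add continuousOn_const
  change |N * (∫ x in (0:ℝ)..1, D x * ρ x) - w α * Z| ≤ _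
  have hmain : |∫ x in (0:ℝ)..1, (N * (D x - (x - α) ^ 2 * f2 x / 2) + (w x + (x - α) * w' x + (-w α))) * ρ x|
      ≤ ∫ x in (0:ℝ)..1, ((B / 4 * q ^ 3) * (x - α) ^ 4 + ((B / 4 * q + B / c ^ 2 * q) * (x - α) ^ 2 + B / c ^ 2 / q)) * ρ x := by
    rw [← Real.norm_eq_abs]
    apply intervalIntegral.norm_integral_le_of_norm_le zero_le_one
    · apply Filter.Eventually.of_forall
      intro x hx
      have hx' : x ∈ Icc (0:ℝ) 1 := Ioc_subset_Icc_self hx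
      rw [norm_mul, Real.norm_of_nonneg (hρ0 x hx'), Real.norm_eq_abs]
      refine mul_le_mul_of_nonneg_right ?_ (hρ0 x hx')
      have b1 := hDr x hx'
      have b2 := hwL x hx'
      have b3 := hw'b x hx'
      set u := |x - α| with hu
      have hu0 : 0 ≤ u := abs_nonneg _
      have hu2 : (x - α) ^ 2 = u ^ 2 := (sq_abs _).symm
      have hu4 : (x - α) ^ 4 = u ^ 4 := by
        calc (x - α) ^ 4 = ((x - α) ^ 2) ^ 2 := by ring
          _ = _ := by rw [hu2]; ring
      have c1 : |N * (D x - (x - α) ^ 2 * f2 x / 2)| ≤ B / 4 * (q ^ 3 * u ^ 4 + q * u ^ 2) := by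
        rw [abs_mul, abs_of_pos hN0]
        calc _ ≤ N * (B / 2 * u ^ 3) := by gcongr
          _ = B / 4 * (2 * q ^ 2 * u ^ 3) := by rw [hqq]; ring
          _ ≤ _ := by
            gcongr
            have : 0 ≤ q * u ^ 2 * (q * u - 1) ^ 2 := by positivity
            nlinarith
      have c2 : |w x + (x - α) * w' x + (-w α)| ≤ B / c ^ 2 * (q * u ^ 2 + 1 / q) := by
        calc _ = |(w x - w α) + (x - α) * w' x| := by congr 1; ring
          _ ≤ |w x - w α| + u * |w' x| := by rw [hu, ← abs_mul]; exact abs_add_le _ _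
          _ ≤ B / c ^ 2 * u + u * (B / c ^ 2) := by gcongr
          _ = B / c ^ 2 * (2 * u) := by ring
          _ ≤ _ := by
            gcongr
            have : q * u ^ 2 + 1 / q - 2 * u = (q * u - 1) ^ 2 / q := by field_simp; ring
            have : 0 ≤ (q * u - 1) ^ 2 / q := by positivity
            linarith
      refine (abs_add_le _ _).trans ((add_le_add c1 c2).trans (le_of_eq ?_))
      rw [hu2, hu4]
      ring
    · exact ii _ (Continuous.continuousOn (by fun_prop))
  rw [hid]
  refine hmain.trans ?_
  rw [hadd, cm, hadd, cm, cst, ← hM2, ← hM4]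
  rotate_left
  · exact Continuous.continuousOn (by fun_prop)
  · exact Continuous.continuousOn (by fun_prop)
  · exact Continuous.continuousOn (by fun_prop)
  · exact Continuous.continuousOn (by fun_prop)
  have m2 : M2 ≤ 2 / (q ^ 2 * c) * Z := by
    rw [hqq, div_mul_eq_mul_div, le_div_iff₀ (by positivity)]
    linarith
  have m4 : M4 ≤ 4 / (q ^ 4 * c ^ 2) * Z := by
    have : M4 ≤ 2 / (q ^ 2 * c) * M2 := by
      rw [hqq, div_mul_eq_mul_div, le_div_iff₀ (by positivity)]
      linarith
    calc M4 ≤ _ := this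
      _ ≤ 2 / (q ^ 2 * c) * (2 / (q ^ 2 * c) * Z) := by gcongr
      _ = _ := by field_simp; ring
  exact core_arith hsq hc hc1 hB0 hZ0 m2 m4

lemma abs_exp_sub_one_le_mul {d e : ℝ} (h : |d| ≤ e) : |Real.exp d - 1| ≤ e * Real.exp e := by
  have he : 0 ≤ e := (abs_nonneg _).trans h
  have h1 : d ≤ e := (le_abs_self d).trans h
  have h2 : -d ≤ e := (neg_le_abs d).trans h
  have h3 : 1 ≤ Real.exp e := Real.one_le_exp he
  rw [abs_le]
  constructor
  · have := Real.add_one_le_exp d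
    nlinarith
  · have := Real.add_one_le_exp (-e)
    have h5 : Real.exp d ≤ Real.exp e := Real.exp_le_exp.2 h1
    have h6 : Real.exp e * Real.exp (-e) = 1 := by rw [← Real.exp_add]; simp
    nlinarith [Real.exp_pos e]

lemma Z_deriv {N : ℝ} (W D : ℝ → ℝ) (hW : Continuous W) (hD : Continuous D) (s : ℝ) :
    HasDerivAt (fun s => ∫ x in (0:ℝ)..1, W x * Real.exp (-N * s * D x))
      (-(N * ∫ x in (0:ℝ)..1, D x * (W x * Real.exp (-N * s * D x)))) s := by
  have hF' : Continuous fun p : ℝ × ℝ => W p.2 * (Real.exp (-N * p.1 * D p.2) * (-N * D p.2)) := by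
    fun_prop
  obtain ⟨C, hC⟩ := ((isCompact_Icc (a := s - 1) (b := s + 1)).prod
    (isCompact_Icc (a := (0:ℝ)) (b := 1))).exists_bound_of_continuousOn hF'.continuousOn
  have := (intervalIntegral.hasDerivAt_integral_of_dominated_loc_of_deriv_le
    (μ := MeasureTheory.volume) (a := 0) (b := 1) (bound := fun _ => C)
    (F := fun s x => W x * Real.exp (-N * s * D x))
    (F' := fun s x => W x * (Real.exp (-N * s * D x) * (-N * D x))) (x₀ := s)
    (s := Metric.ball s 1) (Metric.ball_mem_nhds s one_pos)
    (Filter.Eventually.of_forall fun s => Continuous.aestronglyMeasurable (by fun_prop))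
    (Continuous.intervalIntegrable (by fun_prop) _ _)
    (Continuous.aestronglyMeasurable (by fun_prop))
    (Filter.Eventually.of_forall fun x hx r hr => by
      apply hC (r, x)
      rw [uIoc_of_le zero_le_one] at hx
      rw [Metric.mem_ball, Real.dist_eq, abs_lt] at hr
      exact ⟨⟨by linarith [hr.1], by linarith [hr.2]⟩, ⟨hx.1.le, hx.2⟩⟩)
    (by simp)
    (Filter.Eventually.of_forall fun x hx r hr => by
      have : HasDerivAt (fun r => -N * r * D x) (-N * D x) r := by
        have := ((hasDerivAt_id r).const_mul (-N)).mul_const (D x)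
        simpa using this
      exact (this.exp).const_mul (W x))).2
  refine this.congr_deriv ?_
  rw [← neg_mul, ← intervalIntegral.integral_const_mul]
  congr 1; ext x; ring

lemma ratio_bound {N α c B : ℝ} (hN : 1 ≤ N) (hα : α ∈ Icc (0:ℝ) 1)
    (hc : 0 < c) (hc1 : c ≤ 1) (hB0 : 0 ≤ B)
    (D f2 f3 : ℝ → ℝ) (hDα : D α = 0)
    (hD : ∀ x, HasDerivAt D ((x - α) * f2 x) x)
    (hf2 : ∀ x, HasDerivAt f2 (f3 x) x) (hf3 : Continuous f3)
    (hB2 : ∀ x ∈ Icc (0:ℝ) 1, |f2 x| ≤ B) (hB3 : ∀ x ∈ Icc (0:ℝ) 1, |f3 x| ≤ B)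
    (hk : ∀ x ∈ Icc (0:ℝ) 1, c ≤ 1 + x * (1 - x) * f2 x) :
    |(∫ x in (0:ℝ)..1, BW (N * α) (N * (1 - α)) x * Real.exp (-N * D x)) /
      (∫ x in (0:ℝ)..1, BW (N * α) (N * (1 - α)) x)
      - (1 / (1 + α * (1 - α) * f2 α)) ^ ((1:ℝ)/2)|
    ≤ (1 / c) ^ ((1:ℝ)/2) * ((6 * B / c ^ 4) * Real.exp (6 * B / c ^ 4)) / Real.sqrt N := by
  have hN0 : 0 < N := by linarith
  have hDc : Continuous D := continuous_iff_continuousAt.2 fun x => (hD x).continuousAt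
  have hBW : Continuous (BW (N * α) (N * (1 - α))) :=
    BW_cont (mul_nonneg hN0.le hα.1) (mul_nonneg hN0.le (by linarith [hα.2]))
  set Z : ℝ → ℝ := fun s => ∫ x in (0:ℝ)..1, BW (N * α) (N * (1 - α)) x * Real.exp (-N * s * D x)
    with hZ
  have hZpos : ∀ s, 0 < Z s := by
    intro s
    apply intervalIntegral.intervalIntegral_pos_of_pos_on
    · exact Continuous.intervalIntegrable (by fun_prop) _ _
    · intro x hx
      exact mul_pos (BW_pos hx) (Real.exp_pos _)
    · exact zero_lt_one
  set κ := α * (1 - α) * f2 α with hκ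
  have hκ1 : c ≤ 1 + κ := hk α hα
  have hκs : ∀ s ∈ Icc (0:ℝ) 1, 0 < 1 + s * κ := by
    intro s hs
    have h1 := hs.1
    have h2 := hs.2
    nlinarith
  set K := 6 * B / c ^ 4 with hK
  have hK0 : 0 ≤ K := by positivity
  set e := K / Real.sqrt N with he
  have hq : 1 ≤ Real.sqrt N := by rw [Real.one_le_sqrt]; exact hN
  have hL : ∀ s ∈ Icc (0:ℝ) 1, HasDerivAt (fun s => Real.log (Z s) + 1 / 2 * Real.log (1 + s * κ))
      (-(N * ∫ x in (0:ℝ)..1, D x * (BW (N * α) (N * (1 - α)) x * Real.exp (-N * s * D x))) / Z s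
        + 1 / 2 * (κ / (1 + s * κ))) s := by
    intro s hs
    have h1 := (Z_deriv (N := N) (BW (N * α) (N * (1 - α))) D hBW hDc s).log (hZpos s).ne'
    have h2 : HasDerivAt (fun s => 1 + s * κ) κ s := by
      simpa using ((hasDerivAt_id s).mul_const κ).const_add 1
    exact h1.add ((h2.log (hκs s hs).ne').const_mul (1/2))
  have hLb : ∀ s ∈ Icc (0:ℝ) 1,
      ‖-(N * ∫ x in (0:ℝ)..1, D x * (BW (N * α) (N * (1 - α)) x * Real.exp (-N * s * D x))) / Z s
        + 1 / 2 * (κ / (1 + s * κ))‖ ≤ e := by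
    intro s hs
    have h := core_bound hN hα hs hc hc1 hB0 D f2 f3 hDα hD hf2 hf3 hB2 hB3 hk
    change |_ - κ / (2 * (1 + s * κ)) * Z s| ≤ e * Z s at h
    have hz := hZpos s
    have hk0 := hκs s hs
    have : (-(N * ∫ x in (0:ℝ)..1, D x * (BW (N * α) (N * (1 - α)) x * Real.exp (-N * s * D x))) / Z s
        + 1 / 2 * (κ / (1 + s * κ))) = - ((N * ∫ x in (0:ℝ)..1, D x * (BW (N * α) (N * (1 - α)) x * Real.exp (-N * s * D x))) - κ / (2 * (1 + s * κ)) * Z s) / Z s := by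
      generalize (∫ x in (0:ℝ)..1, D x * (BW (N * α) (N * (1 - α)) x * Real.exp (-N * s * D x))) = J
      field_simp
      ring
    rw [this, Real.norm_eq_abs, abs_div, abs_neg, abs_of_pos hz, div_le_iff₀ hz]
    exact h
  have hmv := (convex_Icc (0:ℝ) 1).norm_image_sub_le_of_norm_hasDerivWithin_le
    (fun s hs => (hL s hs).hasDerivWithinAt) hLb (left_mem_Icc.2 zero_le_one)
    (right_mem_Icc.2 zero_le_one)
  have hk1 : 0 < 1 + κ := by linarith
  rw [Real.norm_eq_abs] at hmv
  simp only [one_mul, zero_mul, add_zero, Real.log_one, mul_zero, sub_zero, norm_one, mul_one] at hmv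
  have hexp := abs_exp_sub_one_le_mul hmv
  have hE : Real.exp (Real.log (Z 1) + 1 / 2 * Real.log (1 + κ) - Real.log (Z 0)) =
      Z 1 / Z 0 * (1 + κ) ^ ((1:ℝ)/2) := by
    rw [Real.exp_sub, Real.exp_add, Real.exp_log (hZpos 1), Real.exp_log (hZpos 0),
      Real.rpow_def_of_pos hk1, mul_comm (1/2 : ℝ) (Real.log _)]
    ring
  rw [hE] at hexp
  have hZ1 : (∫ x in (0:ℝ)..1, BW (N * α) (N * (1 - α)) x * Real.exp (-N * D x)) = Z 1 := by
    simp [hZ]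
  have hZ0 : (∫ x in (0:ℝ)..1, BW (N * α) (N * (1 - α)) x) = Z 0 := by
    simp [hZ]
  rw [hZ1, hZ0]
  have hr : (1 / (1 + κ)) ^ ((1:ℝ)/2) * (1 + κ) ^ ((1:ℝ)/2) = 1 := by
    rw [← Real.mul_rpow (by positivity) hk1.le, one_div_mul_cancel hk1.ne', Real.one_rpow]
  have hrp : 0 ≤ (1 / (1 + κ)) ^ ((1:ℝ)/2) := by positivity
  have hrc : (1 / (1 + κ)) ^ ((1:ℝ)/2) ≤ (1 / c) ^ ((1:ℝ)/2) := by
    apply Real.rpow_le_rpow (by positivity) (one_div_le_one_div_of_le hc hκ1) (by norm_num)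
  have heK : e ≤ K := div_le_self hK0 hq
  have he0 : 0 ≤ e := by positivity
  calc |Z 1 / Z 0 - (1 / (1 + κ)) ^ ((1:ℝ)/2)|
      = |(1 / (1 + κ)) ^ ((1:ℝ)/2) * (Z 1 / Z 0 * (1 + κ) ^ ((1:ℝ)/2) - 1)| := by
        congr 1
        linear_combination (- Z 1 / Z 0) * hr
    _ = (1 / (1 + κ)) ^ ((1:ℝ)/2) * |Z 1 / Z 0 * (1 + κ) ^ ((1:ℝ)/2) - 1| := by
        rw [abs_mul, abs_of_nonneg hrp]
    _ ≤ (1 / c) ^ ((1:ℝ)/2) * (e * Real.exp e) := by gcongr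
    _ ≤ (1 / c) ^ ((1:ℝ)/2) * (e * Real.exp K) := by gcongr
    _ = _ := by rw [he]; ring

lemma GP_deriv {x : ℝ} (hx : x ∈ Ioo (0:ℝ) 1) :
    HasDerivAt GP (Real.log x - Real.log (1 - x)) x := by
  have h0 : x ≠ 0 := hx.1.ne'
  have h1 : 1 - x ≠ 0 := by have := hx.2; intro h; linarith
  have d1 := Real.hasDerivAt_mul_log h0
  have d2 : HasDerivAt (fun x : ℝ => (1 - x) * Real.log (1 - x)) _ x :=
    (Real.hasDerivAt_mul_log h1).comp x ((hasDerivAt_id x).const_sub 1)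
  refine (d1.add d2).congr_deriv ?_
  ring

lemma iter2 {f f1 f2 : ℝ → ℝ} (hf : ∀ x, HasDerivAt f (f1 x) x) (hf1 : ∀ x, HasDerivAt f1 (f2 x) x)
    {x : ℝ} (hx : x ∈ Ioo (0:ℝ) 1) :
    iteratedDeriv 2 (fun x => GP x + f x) x = (1 + x * (1 - x) * f2 x) / (x * (1 - x)) := by
  rw [iteratedDeriv_succ, iteratedDeriv_one]
  have h0 : x ≠ 0 := hx.1.ne'
  have h1 : 1 - x ≠ 0 := by have := hx.2; intro h; linarith
  have ev : deriv (fun x => GP x + f x) =ᶠ[nhds x]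
      fun x => (Real.log x - Real.log (1 - x)) + f1 x := by
    filter_upwards [isOpen_Ioo.mem_nhds hx] with y hy
    exact ((GP_deriv hy).add (hf y)).deriv
  rw [ev.deriv_eq]
  have d2 : HasDerivAt (fun x : ℝ => Real.log (1 - x)) (-1 / (1 - x)) x :=
    ((hasDerivAt_id x).const_sub 1).log h1
  have d3 : HasDerivAt (fun x => Real.log x - Real.log (1 - x) + f1 x) _ x :=
    ((Real.hasDerivAt_log h0).sub d2).add (hf1 x)
  rw [d3.deriv]
  field_simp
  ring

lemma iter2GP {x : ℝ} (hx : x ∈ Ioo (0:ℝ) 1) : iteratedDeriv 2 GP x = 1 / (x * (1 - x)) := by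
  have := iter2 (f := fun _ => 0) (f1 := fun _ => 0) (f2 := fun _ => 0)
    (fun x => hasDerivAt_const x 0) (fun x => hasDerivAt_const x 0) hx
  simpa using this

lemma Qnorm_eq {f f1 : ℝ → ℝ} (hf : ∀ x, HasDerivAt f (f1 x) x) (N : ℕ) {α : ℝ} :
    Qnorm (fun x => GP x + f x) N α = 2 * Real.pi * Real.exp (-(N:ℝ) * GP α) *
      ∫ x in (0:ℝ)..1, BW (N * α) (N * (1 - α)) x *
        Real.exp (-(N:ℝ) * ((x - α) * f1 x - (f x - f α))) := by
  unfold Qnorm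
  rw [mul_assoc (2 * Real.pi) (Real.exp _)]
  congr 1
  rw [← intervalIntegral.integral_const_mul]
  apply intervalIntegral.integral_congr_ae
  have : ∀ᵐ x : ℝ ∂MeasureTheory.volume, x ≠ 1 := by
    simp [MeasureTheory.ae_iff]
  filter_upwards [this] with x hx1 hx
  rw [uIoc_of_le zero_le_one] at hx
  have hx' : x ∈ Ioo (0:ℝ) 1 := ⟨hx.1, lt_of_le_of_ne hx.2 hx1⟩
  unfold Phase BW
  have d3 : HasDerivAt (fun x => GP x + f x) _ x := (GP_deriv hx').add (hf x)
  rw [d3.deriv, Real.rpow_def_of_pos hx'.1,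
    Real.rpow_def_of_pos (by linarith [hx'.2] : 0 < 1 - x), ← Real.exp_add, ← Real.exp_add,
    ← Real.exp_add]
  congr 1
  unfold GP
  ring

lemma QnormGP_eq (N : ℕ) {α : ℝ} :
    Qnorm GP N α = 2 * Real.pi * Real.exp (-(N:ℝ) * GP α) *
      ∫ x in (0:ℝ)..1, BW (N * α) (N * (1 - α)) x := by
  have := Qnorm_eq (f := fun _ => 0) (f1 := fun _ => 0) (fun x => hasDerivAt_const x 0) N (α := α)
  simpa using this

theorem bergman_cp1_uniform_convergence_of_q_to_Omega
    (f0 f1 : ℝ → ℝ) (hf0 : ContDiff ℝ (⊤ : ℕ∞) f0) (hf1 : ContDiff ℝ (⊤ : ℕ∞) f1)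
    (hG0 : ∀ x ∈ Set.Ioo (0:ℝ) 1, 0 < iteratedDeriv 2 (Gt f0 f1 0) x)
    (hG1 : ∀ x ∈ Set.Ioo (0:ℝ) 1, 0 < iteratedDeriv 2 (Gt f0 f1 1) x) :
    ContinuousOn (fun p : ℝ × ℝ => Omg f0 f1 p.1 p.2)
      (Set.Icc (0:ℝ) 1 ×ˢ Set.Icc (0:ℝ) 1) ∧
    (∀ ε : ℝ, 0 < ε → ∃ δ : ℝ, 0 < δ ∧
      ∀ t ∈ Set.Icc (0:ℝ) 1, ∀ α ∈ Set.Ioo (0:ℝ) 1, (α < δ ∨ 1 - α < δ) →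
        |(iteratedDeriv 2 GP α / iteratedDeriv 2 (Gt f0 f1 t) α) ^ ((1:ℝ)/2) - 1| < ε) ∧
    (∃ C : ℝ, 0 < C ∧
      ∀ N : ℕ, 1 ≤ N → ∀ t ∈ Set.Icc (0:ℝ) 1, ∀ α ∈ Set.Icc (0:ℝ) 1,
        |Qnorm (Gt f0 f1 t) N α / Qnorm GP N α - Omg f0 f1 t α| ≤ C * (N:ℝ) ^ (-(1:ℝ)/4)) ∧
    (∀ ε : ℝ, 0 < ε → ∃ N₀ : ℕ, ∀ N : ℕ, N₀ ≤ N →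
      ∀ t ∈ Set.Icc (0:ℝ) 1, ∀ α ∈ Set.Icc (0:ℝ) 1,
        |Qnorm (Gt f0 f1 t) N α / Qnorm GP N α - Omg f0 f1 t α| < ε) := by
  -- the derivatives of the two potentials
  have hder : ∀ f : ℝ → ℝ, ContDiff ℝ (⊤ : ℕ∞) f → ∃ g1 g2 g3 : ℝ → ℝ,
      (∀ x, HasDerivAt f (g1 x) x) ∧ (∀ x, HasDerivAt g1 (g2 x) x) ∧
      (∀ x, HasDerivAt g2 (g3 x) x) ∧ Continuous g3 := by
    intro f hf
    have h1 := (contDiff_infty_iff_deriv.1 hf)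
    have h2 := (contDiff_infty_iff_deriv.1 h1.2)
    have h3 := (contDiff_infty_iff_deriv.1 h2.2)
    exact ⟨deriv f, deriv (deriv f), deriv (deriv (deriv f)), fun x => (h1.1 x).hasDerivAt,
      fun x => (h2.1 x).hasDerivAt, fun x => (h3.1 x).hasDerivAt, h3.2.continuous⟩
  obtain ⟨a1, a2, a3, ha1, ha2, ha3, hac⟩ := hder f0 hf0
  obtain ⟨b1, b2, b3, hb1, hb2, hb3, hbc⟩ := hder f1 hf1
  have ha2c : Continuous a2 := continuous_iff_continuousAt.2 fun x => (ha3 x).continuousAt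
  have hb2c : Continuous b2 := continuous_iff_continuousAt.2 fun x => (hb3 x).continuousAt
  have comb : ∀ (t : ℝ) (u v u' v' : ℝ → ℝ), (∀ x, HasDerivAt u (u' x) x) →
      (∀ x, HasDerivAt v (v' x) x) →
      ∀ x, HasDerivAt (fun x => (1 - t) * u x + t * v x) ((1 - t) * u' x + t * v' x) x := by
    intro t u v u' v' hu hv x
    exact ((hu x).const_mul _).add ((hv x).const_mul _)
  have hit : ∀ t, ∀ x ∈ Ioo (0:ℝ) 1, iteratedDeriv 2 (Gt f0 f1 t) x =
      (1 + x * (1 - x) * ((1 - t) * a2 x + t * b2 x)) / (x * (1 - x)) := by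
    intro t x hx
    exact iter2 (comb t _ _ _ _ ha1 hb1) (comb t _ _ _ _ ha2 hb2) hx
  -- uniform bounds
  have bdd : ∀ g : ℝ → ℝ, Continuous g → ∃ C, ∀ x ∈ Icc (0:ℝ) 1, |g x| ≤ C := by
    intro g hg
    exact isCompact_Icc.exists_bound_of_continuousOn hg.continuousOn
  obtain ⟨A2, hA2⟩ := bdd a2 ha2c
  obtain ⟨A3, hA3⟩ := bdd a3 hac
  obtain ⟨B2, hB2⟩ := bdd b2 hb2c
  obtain ⟨B3, hB3⟩ := bdd b3 hbc
  obtain ⟨B, hBA2, hBA3, hBB2, hBB3⟩ : ∃ B, A2 ≤ B ∧ A3 ≤ B ∧ B2 ≤ B ∧ B3 ≤ B :=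
    ⟨max (max A2 A3) (max B2 B3), by simp, by simp, by simp, by simp⟩
  have hB0 : 0 ≤ B :=
    ((abs_nonneg _).trans (hA2 0 (left_mem_Icc.2 zero_le_one))).trans hBA2
  have lower : ∀ g : ℝ → ℝ, Continuous g →
      (∀ x ∈ Ioo (0:ℝ) 1, 0 < (1 + x * (1 - x) * g x) / (x * (1 - x))) →
      ∃ c, 0 < c ∧ ∀ x ∈ Icc (0:ℝ) 1, c ≤ 1 + x * (1 - x) * g x := by
    intro g hg hpos
    have hcont : Continuous fun x => 1 + x * (1 - x) * g x := by fun_prop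
    obtain ⟨x0, hx0, hmin⟩ := isCompact_Icc.exists_isMinOn
      (nonempty_Icc.2 (zero_le_one' ℝ)) hcont.continuousOn
    refine ⟨_, ?_, fun x hx => hmin hx⟩
    rcases eq_or_lt_of_le hx0.1 with h | h
    · simp [← h]
    rcases eq_or_lt_of_le hx0.2 with h' | h'
    · simp [h']
    have hp := hpos x0 ⟨h, h'⟩
    exact (div_pos_iff_of_pos_right (mul_pos h (by linarith))).1 hp
  obtain ⟨c0, hc0, hc0'⟩ := lower a2 ha2c (fun x hx => by
    have := hG0 x hx; rw [hit 0 x hx] at this; simpa using this)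
  obtain ⟨c1, hc1, hc1'⟩ := lower b2 hb2c (fun x hx => by
    have := hG1 x hx; rw [hit 1 x hx] at this; simpa using this)
  obtain ⟨c, hc, hcle, hcc0, hcc1⟩ : ∃ c, 0 < c ∧ c ≤ 1 ∧ c ≤ c0 ∧ c ≤ c1 :=
    ⟨min 1 (min c0 c1), by simp [hc0, hc1], by simp, by simp, by simp⟩
  have hk : ∀ t ∈ Icc (0:ℝ) 1, ∀ x ∈ Icc (0:ℝ) 1,
      c ≤ 1 + x * (1 - x) * ((1 - t) * a2 x + t * b2 x) := by
    intro t ht x hx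
    have h1 := hc0' x hx
    have h2 := hc1' x hx
    have h3 : (1 - t) * c ≤ (1 - t) * (1 + x * (1 - x) * a2 x) :=
      mul_le_mul_of_nonneg_left (by linarith) (by linarith [ht.2])
    have h4 : t * c ≤ t * (1 + x * (1 - x) * b2 x) :=
      mul_le_mul_of_nonneg_left (by linarith) ht.1
    linarith
  have cb : ∀ t ∈ Icc (0:ℝ) 1, ∀ u v : ℝ, |u| ≤ B → |v| ≤ B → |(1 - t) * u + t * v| ≤ B := by
    intro t ht u v hu hv
    rw [abs_le] at *
    have := ht.1
    have := ht.2
    constructor <;> nlinarith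
  have hf2b : ∀ t ∈ Icc (0:ℝ) 1, ∀ x ∈ Icc (0:ℝ) 1, |(1 - t) * a2 x + t * b2 x| ≤ B :=
    fun t ht x hx => cb t ht _ _ ((hA2 x hx).trans hBA2) ((hB2 x hx).trans hBB2)
  have hf3b : ∀ t ∈ Icc (0:ℝ) 1, ∀ x ∈ Icc (0:ℝ) 1, |(1 - t) * a3 x + t * b3 x| ≤ B :=
    fun t ht x hx => cb t ht _ _ ((hA3 x hx).trans hBA3) ((hB3 x hx).trans hBB3)
  have hquot : ∀ t, ∀ α ∈ Ioo (0:ℝ) 1,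
      iteratedDeriv 2 GP α / iteratedDeriv 2 (Gt f0 f1 t) α =
      1 / (1 + α * (1 - α) * ((1 - t) * a2 α + t * b2 α)) := by
    intro t α hα
    rw [iter2GP hα, hit t α hα]
    have h0 : α ≠ 0 := hα.1.ne'
    have h1 : 1 - α ≠ 0 := by have := hα.2; intro h; linarith
    rw [div_div_div_cancel_right₀ (mul_ne_zero h0 h1)]
  have hOm : ∀ t, ∀ α ∈ Icc (0:ℝ) 1, Omg f0 f1 t α =
      (1 / (1 + α * (1 - α) * ((1 - t) * a2 α + t * b2 α))) ^ ((1:ℝ)/2) := by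
    intro t α hα
    unfold Omg
    split_ifs with h
    · rcases h with h | h <;> simp [h]
    · push Not at h
      rw [hquot t α ⟨lt_of_le_of_ne hα.1 (Ne.symm h.1), lt_of_le_of_ne hα.2 h.2⟩]
  have hmain : ∃ C : ℝ, 0 < C ∧
      ∀ N : ℕ, 1 ≤ N → ∀ t ∈ Set.Icc (0:ℝ) 1, ∀ α ∈ Set.Icc (0:ℝ) 1,
        |Qnorm (Gt f0 f1 t) N α / Qnorm GP N α - Omg f0 f1 t α| ≤ C * (N:ℝ) ^ (-(1:ℝ)/4) := by
    refine ⟨(1 / c) ^ ((1:ℝ)/2) * ((6 * B / c ^ 4) * Real.exp (6 * B / c ^ 4)) + 1, by positivity, ?_⟩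
    intro N hN t ht α hα
    have hN' : (1:ℝ) ≤ N := by exact_mod_cast hN
    set f : ℝ → ℝ := fun x => (1 - t) * f0 x + t * f1 x with hf
    have hf1d := comb t _ _ _ _ ha1 hb1
    have hf2d := comb t _ _ _ _ ha2 hb2
    have hf3d := comb t _ _ _ _ ha3 hb3
    have hb := ratio_bound hN' hα hc hcle hB0
      (fun x => (x - α) * ((1 - t) * a1 x + t * b1 x) - (f x - f α)) _ _ (by simp)
      (fun x => by
        have := (((hasDerivAt_id x).sub_const α).mul (hf2d x)).sub ((hf1d x).sub_const (f α))
        refine this.congr_deriv ?_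
        simp only [id]; ring)
      hf3d (by fun_prop) (hf2b t ht) (hf3b t ht) (hk t ht)
    rw [hOm t α hα]
    have hQ : Qnorm (Gt f0 f1 t) N α = _ := Qnorm_eq hf1d N (α := α)
    rw [hQ, QnormGP_eq, mul_div_mul_left _ _ (by positivity)]
    refine hb.trans ?_
    have hp : 1 / Real.sqrt N ≤ (N:ℝ) ^ (-(1:ℝ)/4) := by
      rw [Real.sqrt_eq_rpow, one_div, ← Real.rpow_neg (by linarith)]
      exact Real.rpow_le_rpow_of_exponent_le hN' (by norm_num)
    rw [div_eq_mul_one_div]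
    have h0 : 0 ≤ 1 / Real.sqrt N := by positivity
    have h1 : 0 ≤ (1 / c) ^ ((1:ℝ)/2) * ((6 * B / c ^ 4) * Real.exp (6 * B / c ^ 4)) := by
      positivity
    exact mul_le_mul (by linarith) hp h0 (by linarith)
  refine ⟨?_, ?_, hmain, ?_⟩
  · have : ContinuousOn (fun p : ℝ × ℝ =>
        (1 / (1 + p.2 * (1 - p.2) * ((1 - p.1) * a2 p.2 + p.1 * b2 p.2))) ^ ((1:ℝ)/2))
        (Set.Icc (0:ℝ) 1 ×ˢ Set.Icc (0:ℝ) 1) := by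
      apply ContinuousOn.rpow_const
      · apply ContinuousOn.div continuousOn_const (Continuous.continuousOn (by fun_prop))
        intro p hp
        have := hk p.1 hp.1 p.2 hp.2
        intro h; linarith
      · intro p hp
        right; norm_num
    exact this.congr (fun p hp => hOm p.1 p.2 hp.2)
  · intro ε hε
    refine ⟨ε * c / (B + 1), by positivity, ?_⟩
    intro t ht α hα hδ
    have hα' := Ioo_subset_Icc_self hα
    rw [hquot t α hα]
    have h1 := hk t ht α hα'
    have h2 := hf2b t ht α hα'
    set κ := α * (1 - α) * ((1 - t) * a2 α + t * b2 α) with hκ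
    have hκb : |κ| < ε * c := by
      have hm : 0 < α * (1 - α) := mul_pos hα.1 (by linarith [hα.2])
      have hm2 : α * (1 - α) < ε * c / (B + 1) := by
        rcases hδ with h | h
        · nlinarith [hα.1, hα.2]
        · nlinarith [hα.1, hα.2]
      rw [hκ, abs_mul, abs_of_pos hm]
      rw [lt_div_iff₀ (by positivity)] at hm2
      nlinarith
    have hpos : 0 < 1 + κ := by linarith
    set r := (1 / (1 + κ)) ^ ((1:ℝ)/2) with hr
    have hr0 : 0 ≤ r := by positivity
    have hr2 : r * r = 1 / (1 + κ) := by
      rw [hr, ← Real.rpow_add (by positivity)]; norm_num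
    have e1 : |r - 1| * (r + 1) = |κ| / (1 + κ) := by
      rw [← abs_of_nonneg (show 0 ≤ r + 1 by linarith), ← abs_mul]
      have : (r - 1) * (r + 1) = - (κ / (1 + κ)) := by
        calc (r - 1) * (r + 1) = r * r - 1 := by ring
          _ = _ := by rw [hr2]; field_simp; ring
      rw [this, abs_neg, abs_div, abs_of_pos hpos]
    have e2 : |κ| / (1 + κ) < ε := by
      rw [div_lt_iff₀ hpos]
      nlinarith
    nlinarith [abs_nonneg (r - 1)]
  · intro ε hε
    obtain ⟨C, hC, hb⟩ := hmain
    have ht : Tendsto (fun N : ℕ => C * (N:ℝ) ^ (-(1:ℝ)/4)) atTop (nhds 0) := by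
      have h := (tendsto_rpow_neg_atTop (show (0:ℝ) < 1/4 by norm_num)).comp
        tendsto_natCast_atTop_atTop
      have h' := h.const_mul C
      rw [mul_zero] at h'
      refine h'.congr fun N => ?_
      simp only [Function.comp]
      norm_num
    obtain ⟨N0, hN0⟩ := eventually_atTop.1 (ht.eventually (gt_mem_nhds hε))
    refine ⟨max N0 1, fun N hN t htt α hα => ?_⟩
    exact (hb N (le_trans (le_max_right _ _) hN) t htt α hα).trans_lt
      (hN0 N (le_trans (le_max_left _ _) hN))
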